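/- Let S = {(1,1,0),(−1,−1,0),(1,0,1),(−1,0,−1),(0,1,1),(0,−1,−1)} ⊂ ℤ³. Then the origin lies in the interior of P := convexHull ℝ S, every point of S is an extreme point of P, and P ∩ ℤ³ = S ∪ {0}; i.e., S defines a terminal Fano polytope. -/

import Mathlib

/-- The embedding of the lattice `ℤ³` into `ℝ³`. -/
def latticeEmbed₃ (v : Fin 3 → ℤ) : Fin 3 → ℝ := fun i => (v i : ℝ)

/-!
The vectors `1 - eᵢ` form a basis of `ℝⁿ` for `n ≥ 2`, and `P` is the cross-polytope on this basis
for `n = 3`: the unit ball of the `ℓ¹`-norm of the coordinates `cᵢ(x) = (∑ⱼ xⱼ) / (n - 1) - xᵢ`.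
So the origin is interior, and the `i`-th coordinate exposes the `i`-th basis vector.
For an integral point `x` the integers `(n - 1) cᵢ(x)` are all congruent modulo `n - 1`. If `x ∈ P`,
the sum of their absolute values is at most `n - 1 < n`, so one of them vanishes and all are
divisible by `n - 1`. Hence `x` lies in the lattice spanned by the basis, whose only points in `P`
are `0` and the vertices.
-/

open Set Module
open scoped Pointwise

section CrossPolytope

variable {ι E : Type*} [AddCommGroup E] [Module ℝ E]

theorem sum_smul_mem_of_absConvex [Fintype ι] {s : Set E} (hs : AbsConvex ℝ s)
    (hne : s.Nonempty) {z : ι → E} (hz : ∀ i, z i ∈ s) {a : ι → ℝ} (ha : ∑ i, |a i| ≤ 1) :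
    ∑ i, a i • z i ∈ s := by
  -- The missing weight `1 - ∑ i, |a i|` is put on `0 ∈ s`, which is indexed by `none`.
  let w : Option ι → ℝ := fun o => o.elim (1 - ∑ i, |a i|) fun i => |a i|
  let y : Option ι → E := fun o => o.elim 0 fun i => (SignType.sign (a i) : ℝ) • z i
  have hw_nonneg : ∀ o ∈ Finset.univ, 0 ≤ w o := by
    rintro (_ | i) _
    exacts [sub_nonneg.2 ha, abs_nonneg _]
  have hw_sum : ∑ o, w o = 1 := by simp [w, Fintype.sum_option]
  have hy : ∀ o ∈ Finset.univ, y o ∈ s := by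
    rintro (_ | i) _
    · exact hs.1.zero_mem hne
    · refine hs.1.smul_mem ?_ (hz i)
      rcases lt_trichotomy (a i) 0 with h | h | h <;> simp [h]
  simpa [w, y, Fintype.sum_option, smul_smul, abs_mul_sign] using hs.2.sum_mem hw_nonneg hw_sum hy

/-- The cross-polytope with vertices `± v i`; it is meant for a linearly independent family `v`. -/
def crossPolytope (v : ι → E) : Set E :=
  convexHull ℝ (range v ∪ -range v)

theorem convex_setOf_sum_abs_repr_le [Fintype ι] (b : Basis ι ℝ E) (r : ℝ) :
    Convex ℝ {x | ∑ i, |b.repr x i| ≤ r} := by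
  intro x hx y hy s t hs ht hst
  calc ∑ i, |b.repr (s • x + t • y) i|
      ≤ ∑ i, (s * |b.repr x i| + t * |b.repr y i|) := by
        gcongr with i
        simpa [abs_mul, abs_of_nonneg hs, abs_of_nonneg ht] using
          abs_add_le (s * b.repr x i) (t * b.repr y i)
    _ = s * ∑ i, |b.repr x i| + t * ∑ i, |b.repr y i| := by
        rw [Finset.sum_add_distrib, Finset.mul_sum, Finset.mul_sum]
    _ ≤ s * r + t * r := by gcongr <;> assumption
    _ = r := by rw [← add_mul, hst, one_mul]

theorem mem_crossPolytope_iff [Fintype ι] [Nonempty ι] (b : Basis ι ℝ E) {x : E} :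
    x ∈ crossPolytope b ↔ ∑ i, |b.repr x i| ≤ 1 := by
  classical
  constructor
  · refine fun hx => convexHull_min ?_ (convex_setOf_sum_abs_repr_le b 1) hx
    have hb (i : ι) : ∑ j, |b.repr (b i) j| = 1 := by
      simp [Finsupp.single_apply, apply_ite abs]
    rintro y (⟨i, rfl⟩ | ⟨i, hi⟩)
    · exact (hb i).le
    · rw [← neg_eq_iff_eq_neg.2 hi]
      simpa using (hb i).le
  · intro hx
    rw [crossPolytope, convexHull_union_neg_eq_absConvexHull, ← b.sum_repr x]
    exact sum_smul_mem_of_absConvex absConvex_absConvexHull (range_nonempty b).absConvexHull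
      (fun i => subset_absConvexHull (mem_range_self i)) hx

theorem neg_mem_crossPolytope_iff {v : ι → E} {x : E} :
    -x ∈ crossPolytope v ↔ x ∈ crossPolytope v := by
  rw [← Set.mem_neg, crossPolytope, ← convexHull_neg, union_neg, neg_neg, union_comm]

theorem eq_or_eq_neg_of_mem_crossPolytope [Finite ι] (b : Basis ι ℝ E) {x : E}
    (hx : x ∈ crossPolytope b) {i : ι} (hi : 1 ≤ |b.repr x i|) : x = b i ∨ x = -b i := by
  classical
  have : Nonempty ι := ⟨i⟩
  cases nonempty_fintype ι
  have hsum : |b.repr x i| + ∑ j ∈ Finset.univ.erase i, |b.repr x j| ≤ 1 := by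
    rw [Finset.add_sum_erase _ (fun j => |b.repr x j|) (Finset.mem_univ i)]
    exact (mem_crossPolytope_iff b).1 hx
  have hrest_nonneg : 0 ≤ ∑ j ∈ Finset.univ.erase i, |b.repr x j| :=
    Finset.sum_nonneg fun j _ => abs_nonneg _
  have hrest : ∑ j ∈ Finset.univ.erase i, |b.repr x j| = 0 := by linarith
  have hzero (j : ι) (hj : j ≠ i) : b.repr x j = 0 :=
    abs_eq_zero.1 <| (Finset.sum_eq_zero_iff_of_nonneg fun j _ => abs_nonneg (b.repr x j)).1 hrest j
      (Finset.mem_erase.2 ⟨hj, Finset.mem_univ j⟩)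
  have hx_eq : x = b.repr x i • b i := by
    conv_lhs => rw [← b.sum_repr x]
    exact Fintype.sum_eq_single i fun j hj => by rw [hzero j hj, zero_smul]
  have habs : |b.repr x i| = 1 := by linarith
  exact (eq_or_eq_neg_of_abs_eq habs).imp (fun h => by rw [hx_eq, h, one_smul])
    (fun h => by rw [hx_eq, h, neg_one_smul])

theorem eq_zero_or_mem_of_mem_span_int_of_mem_crossPolytope [Finite ι]
    (b : Basis ι ℝ E) {x : E} (hx : x ∈ Submodule.span ℤ (range b)) (hxP : x ∈ crossPolytope b) :
    x = 0 ∨ x ∈ range b ∪ -range b := by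
  by_cases hzero : ∀ i, b.repr x i = 0
  · exact Or.inl (b.forall_coord_eq_zero_iff.1 hzero)
  · obtain ⟨i, hi⟩ := not_forall.1 hzero
    obtain ⟨m, hm⟩ := (b.mem_span_iff_repr_mem ℤ x).1 hx i
    rw [algebraMap_int_eq, eq_intCast] at hm
    have hone : 1 ≤ |b.repr x i| := by
      rw [← hm] at hi ⊢
      exact_mod_cast Int.one_le_abs (Int.cast_ne_zero.1 hi)
    rcases eq_or_eq_neg_of_mem_crossPolytope b hxP hone with rfl | rfl <;> simp

variable [TopologicalSpace E]

theorem neg_mem_exposedPoints {A : Set E} (hA : ∀ y ∈ A, -y ∈ A) {x : E}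
    (hx : x ∈ A.exposedPoints ℝ) : -x ∈ A.exposedPoints ℝ := by
  obtain ⟨hxA, l, hl⟩ := hx
  refine ⟨hA x hxA, -l, fun y hy => ?_⟩
  simpa [neg_eq_iff_eq_neg] using hl (-y) (hA y hy)

variable [IsTopologicalAddGroup E] [ContinuousSMul ℝ E] [T2Space E]

theorem basis_mem_exposedPoints_crossPolytope [Finite ι] (b : Basis ι ℝ E) (i : ι) :
    b i ∈ (crossPolytope b).exposedPoints ℝ := by
  have := b.finiteDimensional_of_finite
  refine ⟨subset_convexHull ℝ _ (Or.inl (mem_range_self i)),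
    (b.coord i).toContinuousLinearMap, fun y hy => ?_⟩
  simp only [LinearMap.coe_toContinuousLinearMap', Basis.coord_apply, Basis.repr_self,
    Finsupp.single_eq_same]
  have hy_cases (h : 1 ≤ b.repr y i) : y = b i := by
    rcases eq_or_eq_neg_of_mem_crossPolytope b hy (h.trans (le_abs_self _)) with rfl | rfl
    · rfl
    · norm_num at h
  refine ⟨le_of_not_gt fun h => ?_, hy_cases⟩
  simp [hy_cases h.le] at h

theorem subset_exposedPoints_crossPolytope [Finite ι] (b : Basis ι ℝ E) :
    range b ∪ -range b ⊆ (crossPolytope b).exposedPoints ℝ := by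
  rintro x (⟨i, rfl⟩ | ⟨i, hi⟩)
  · exact basis_mem_exposedPoints_crossPolytope b i
  · rw [← neg_eq_iff_eq_neg.2 hi]
    exact neg_mem_exposedPoints (fun _ => neg_mem_crossPolytope_iff.2)
      (basis_mem_exposedPoints_crossPolytope b i)

theorem zero_mem_interior_crossPolytope [Finite ι] [Nonempty ι] (b : Basis ι ℝ E) :
    0 ∈ interior (crossPolytope b) := by
  cases nonempty_fintype ι
  have := b.finiteDimensional_of_finite
  have hcont : Continuous fun x => ∑ i, |b.repr x i| :=
    continuous_finsetSum _ fun i _ => (b.coord i).continuous_of_finiteDimensional.abs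
  refine interior_maximal (t := {x | ∑ i, |b.repr x i| < 1})
    (fun x hx => (mem_crossPolytope_iff b).2 (le_of_lt hx)) (isOpen_lt hcont continuous_const) ?_
  simp

end CrossPolytope

section SkewBasis

variable {ι : Type*}

variable (ι) in
/-- The embedding of the lattice `ℤⁿ` into `ℝⁿ`. -/
def latticeEmbed : (ι → ℤ) →+ (ι → ℝ) :=
  (Int.castAddHom ℝ).compLeft ι

theorem latticeEmbed_apply (x : ι → ℤ) (i : ι) : latticeEmbed ι x i = x i :=
  rfl

variable (ι) in
theorem latticeEmbed_injective : Function.Injective (latticeEmbed ι) :=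
  Int.cast_injective.comp_left

variable (ι) in
/-- The vectors `± (1 - eᵢ)` of `ℤⁿ`, for `n = 3` the vertices of the skew octahedron. -/
def skewVertices [DecidableEq ι] : Set (ι → ℤ) :=
  range (fun i => 1 - Pi.single i 1) ∪ -range (fun i => 1 - Pi.single i 1)

theorem skewVertices_fin_three : skewVertices (Fin 3) =
    {![1,1,0], ![-1,-1,0], ![1,0,1], ![-1,0,-1], ![0,1,1], ![0,-1,-1]} := by
  have hv : (fun i : Fin 3 => (1 - Pi.single i 1 : Fin 3 → ℤ)) =
      ![![0,1,1], ![1,0,1], ![1,1,0]] := by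
    decide
  ext x
  simp only [skewVertices, hv, Matrix.range_cons, Matrix.range_empty, mem_union, Set.mem_neg,
    mem_insert_iff, mem_singleton_iff, neg_eq_iff_eq_neg, union_empty, Matrix.neg_cons,
    Matrix.neg_empty, neg_zero]
  tauto

variable [Fintype ι]

theorem exists_eq_zero_of_sum_abs_lt_card {m : ι → ℤ} (hm : ∑ i, |m i| < Fintype.card ι) :
    ∃ i, m i = 0 := by
  by_contra! hne
  refine hm.not_ge ?_
  calc (Fintype.card ι : ℤ) = ∑ _i : ι, 1 := by simp
    _ ≤ ∑ i, |m i| := Finset.sum_le_sum fun i _ => Int.one_le_abs (hne i)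

variable [Nontrivial ι]

variable (ι) in
theorem card_sub_one_pos : (0 : ℝ) < Fintype.card ι - 1 :=
  sub_pos.2 (Nat.one_lt_cast.2 Fintype.one_lt_card)

variable (ι) in
/-- The basis `1 - eᵢ` of `ℝⁿ` for `n ≥ 2`, defined through its coordinate functions; see
`skewBasis_apply` for the basis vectors. -/
noncomputable def skewBasis : Basis ι ℝ (ι → ℝ) :=
  .ofEquivFun
    { toFun x i := (∑ j, x j) / (Fintype.card ι - 1) - x i
      invFun c i := ∑ j, c j - c i
      map_add' x y := by
        ext i
        simp only [Pi.add_apply, Finset.sum_add_distrib]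
        ring
      map_smul' r x := by
        ext i
        simp only [Pi.smul_apply, smul_eq_mul, ← Finset.mul_sum, RingHom.id_apply]
        ring
      left_inv x := by
        have := (card_sub_one_pos ι).ne'
        ext i
        simp only [Finset.sum_sub_distrib, Finset.sum_const, Finset.card_univ, nsmul_eq_mul]
        field_simp
        ring
      right_inv c := by
        have := (card_sub_one_pos ι).ne'
        ext i
        simp only [Finset.sum_sub_distrib, Finset.sum_const, Finset.card_univ, nsmul_eq_mul]
        field_simp
        ring }

theorem skewBasis_repr_apply (x : ι → ℝ) (i : ι) :
    (skewBasis ι).repr x i = (∑ j, x j) / (Fintype.card ι - 1) - x i :=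
  rfl

theorem skewBasis_apply [DecidableEq ι] (i : ι) : skewBasis ι i = 1 - Pi.single i 1 := by
  ext j
  simp [skewBasis, Basis.ofEquivFun, Pi.single_apply, eq_comm]

theorem card_sub_one_dvd_sum_of_mem_crossPolytope {x : ι → ℤ}
    (hx : latticeEmbed ι x ∈ crossPolytope (skewBasis ι)) :
    (Fintype.card ι - 1 : ℤ) ∣ ∑ j, x j := by
  have hn := card_sub_one_pos ι
  let m (i : ι) : ℤ := ∑ j, x j - (Fintype.card ι - 1) * x i
  have hm (i : ι) : (m i : ℝ) =
      (Fintype.card ι - 1) * (skewBasis ι).repr (latticeEmbed ι x) i := by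
    simp only [m, skewBasis_repr_apply, latticeEmbed_apply]
    push_cast
    field_simp
  have hm_sum : ∑ i, |(m i : ℝ)| ≤ Fintype.card ι - 1 := by
    simp only [hm, abs_mul, abs_of_pos hn, ← Finset.mul_sum]
    exact mul_le_of_le_one_right hn.le ((mem_crossPolytope_iff _).1 hx)
  have hm_lt : ∑ i, |m i| < Fintype.card ι := Int.lt_of_le_sub_one (by exact_mod_cast hm_sum)
  obtain ⟨i, hi⟩ := exists_eq_zero_of_sum_abs_lt_card hm_lt
  exact ⟨x i, sub_eq_zero.1 hi⟩

theorem mem_span_int_skewBasis_of_mem_crossPolytope {x : ι → ℤ}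
    (hx : latticeEmbed ι x ∈ crossPolytope (skewBasis ι)) :
    latticeEmbed ι x ∈ Submodule.span ℤ (range (skewBasis ι)) := by
  obtain ⟨k, hk⟩ := card_sub_one_dvd_sum_of_mem_crossPolytope hx
  have hk_real : ∑ j, (x j : ℝ) = (Fintype.card ι - 1) * k := by exact_mod_cast hk
  refine ((skewBasis ι).mem_span_iff_repr_mem ℤ _).2 fun i => ⟨k - x i, ?_⟩
  simp only [skewBasis_repr_apply, latticeEmbed_apply, hk_real, algebraMap_int_eq, eq_intCast,
    Int.cast_sub, mul_div_cancel_left₀ _ (card_sub_one_pos ι).ne']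

theorem latticeEmbed_image_skewVertices [DecidableEq ι] :
    latticeEmbed ι '' skewVertices ι = range (skewBasis ι) ∪ -range (skewBasis ι) := by
  have hv (i : ι) : latticeEmbed ι (1 - Pi.single i 1) = skewBasis ι i := by
    ext j
    simp [skewBasis_apply, latticeEmbed_apply, Pi.single_apply]
  simp only [skewVertices, image_union, image_neg, ← range_comp, Function.comp_def, hv]

end SkewBasis

theorem skew_octahedron_is_terminal_fano_general {ι : Type*} [Finite ι] [DecidableEq ι]
    [Nontrivial ι] {S : Set (ι → ℤ)} (hS : S = skewVertices ι) {P : Set (ι → ℝ)}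
    (hP : P = convexHull ℝ (latticeEmbed ι '' S)) :
    0 ∈ interior P ∧
    (∀ s ∈ S, latticeEmbed ι s ∈ extremePoints ℝ P) ∧
    (∀ x : ι → ℤ, latticeEmbed ι x ∈ P ↔ x ∈ S ∨ x = 0) := by
  cases nonempty_fintype ι
  have hS_image : latticeEmbed ι '' S = range (skewBasis ι) ∪ -range (skewBasis ι) := by
    rw [hS, latticeEmbed_image_skewVertices]
  have hP_cross : P = crossPolytope (skewBasis ι) := by rw [hP, hS_image, crossPolytope]
  have hinterior : 0 ∈ interior P := hP_cross ▸ zero_mem_interior_crossPolytope (skewBasis ι)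
  have hextreme (s : ι → ℤ) (hs : s ∈ S) : latticeEmbed ι s ∈ extremePoints ℝ P := by
    rw [hP_cross]
    exact exposedPoints_subset_extremePoints <|
      subset_exposedPoints_crossPolytope _ (hS_image ▸ mem_image_of_mem _ hs)
  refine ⟨hinterior, hextreme, fun x => ⟨fun hx => ?_, ?_⟩⟩
  · rw [hP_cross] at hx
    have hspan := mem_span_int_skewBasis_of_mem_crossPolytope hx
    refine (eq_zero_or_mem_of_mem_span_int_of_mem_crossPolytope _ hspan hx).symm.imp ?_ ?_
    · rw [← hS_image, (latticeEmbed_injective ι).mem_set_image]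
      exact id
    · exact (map_eq_zero_iff _ (latticeEmbed_injective ι)).1
  · rintro (hx | rfl)
    · exact (hextreme x hx).1
    · simpa only [map_zero] using interior_subset hinterior

/-- The octahedron with vertices `±(1,1,0), ±(1,0,1), ±(0,1,1)` is a terminal Fano polytope (it corresponds to `(ℙ¹ × ℙ¹ × ℙ¹)/σ`). -/
theorem skew_octahedron_is_terminal_fano (S : Set (Fin 3 → ℤ))
    (hS : S = {![1,1,0], ![-1,-1,0], ![1,0,1], ![-1,0,-1], ![0,1,1], ![0,-1,-1]})
    (P : Set (Fin 3 → ℝ)) (hP : P = convexHull ℝ (latticeEmbed₃ '' S)) :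
    (0 : Fin 3 → ℝ) ∈ interior P ∧
    (∀ s ∈ S, latticeEmbed₃ s ∈ Set.extremePoints ℝ P) ∧
    (∀ x : Fin 3 → ℤ, latticeEmbed₃ x ∈ P ↔ x ∈ S ∨ x = 0) :=
  skew_octahedron_is_terminal_fano_general (hS.trans skewVertices_fin_three.symm) hP
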